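/- For every real λ with 0 < λ < 0.312, the state ρ̃(λ) on ℂ⁸⊗ℂ⁸ satisfies: (a) SN(ρ̃(λ)) = 3; (b) ρ̃(λ) is Bell-nonlocal under projective measurements: there exist Hermitian operators A₀, A₁ on ℂ⁸ and B₀, B₁ on ℂ⁸, each of the form P − Q with P, Q orthogonal projections satisfying PQ = 0, such that Tr[ρ̃(λ)(A₀⊗B₀ + A₀⊗B₁ + A₁⊗B₀ − A₁⊗B₁)] > 2; (c) nevertheless, for all finite families of projective measurements {M_{a|x}}_{a} on ℂ⁸ (x ∈ X finite) and {N_{b|y}}_{b} on ℂ⁸ (y ∈ Y finite), there exist a finite set Λ, weights q_μ ≥ 0 with Σ_μ q_μ = 1, and conditional probability distributions P(a|x,μ) and Q(b|y,μ), such that for all a, b, x, y: Tr[(M_{a|x} ⊗ N_{b|y}) ρ̃(λ)] = λ Σ_μ q_μ P(a|x,μ) Q(b|y,μ) + (1−λ) ⟨φ₂⁺| (M_{a|x} ⊗ N_{b|y}) |φ₂⁺⟩; hence every such correlation can be simulated using shared randomness together with the Schmidt-rank-2 state |φ₂⁺⟩, so no Bell-nonlocal game restricted to projective measurements can certify that SN(ρ̃(λ))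 > 2. -/

import Mathlib

open Matrix
open scoped Kronecker ComplexOrder

/-- The Schmidt rank of a bipartite vector `ψ : m × n → ℂ`, i.e. the rank of the
matrix `C_ψ` with `(C_ψ)_{ij} = ψ (i, j)`. -/
noncomputable def schmidtRank {m n : Type*} [Fintype m] [Fintype n] (ψ : m × n → ℂ) : ℕ :=
  (Matrix.of fun i j => ψ (i, j)).rank

/-- A matrix `ρ` indexed by `m × n` has Schmidt number at most `r` if it can be written
as `∑_k ψ_k ψ_k†` with each `ψ_k` of Schmidt rank at most `r`. -/
def SchmidtNumberLE {m n : Type*} [Fintype m] [Fintype n]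
    (ρ : Matrix (m × n) (m × n) ℂ) (r : ℕ) : Prop :=
  ∃ (k : ℕ) (ψ : Fin k → m × n → ℂ),
    (∀ i, schmidtRank (ψ i) ≤ r) ∧
    ρ = ∑ i, Matrix.vecMulVec (ψ i) (star (ψ i))

/-- The Schmidt number: the least `r` such that `SchmidtNumberLE ρ r`. -/
noncomputable def schmidtNumber {m n : Type*} [Fintype m] [Fintype n]
    (ρ : Matrix (m × n) (m × n) ℂ) : ℕ :=
  sInf {r | SchmidtNumberLE ρ r}

/-- A density matrix: positive semidefinite with unit trace. -/
def IsDensityMatrix {n : Type*} [Fintype n] (ρ : Matrix n n ℂ) : Prop :=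
  ρ.PosSemidef ∧ ρ.trace = 1

/-- An effect: a Hermitian matrix `M` with `0 ≤ M ≤ I`. -/
def IsEffect {n : Type*} [Fintype n] [DecidableEq n] (M : Matrix n n ℂ) : Prop :=
  M.PosSemidef ∧ (1 - M).PosSemidef

/-- The maximally entangled unit vector `|Φ⁺_d⟩ = (1/√d) ∑ᵢ e_{(i,i)}`. -/
noncomputable def maxEnt (d : ℕ) : Fin d × Fin d → ℂ :=
  fun p => if p.1 = p.2 then ((1 / Real.sqrt d : ℝ) : ℂ) else 0

/-- The projector `P_d = |Φ⁺_d⟩⟨Φ⁺_d|`. -/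
noncomputable def projME (d : ℕ) : Matrix (Fin d × Fin d) (Fin d × Fin d) ℂ :=
  Matrix.vecMulVec (maxEnt d) (star (maxEnt d))

/-- The isotropic state `ρ^iso_d(p) = p P_d + (1−p) I/d²`. -/
noncomputable def isoState (d : ℕ) (p : ℝ) : Matrix (Fin d × Fin d) (Fin d × Fin d) ℂ :=
  (p : ℂ) • projME d + (((1 - p) / (d ^ 2 : ℝ) : ℝ) : ℂ) • 1

/-- `|φ₂⁺⟩ = (1/√2)(e_{(0,0)} + e_{(1,1)}) ∈ ℂ⁸⊗ℂ⁸`. -/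
noncomputable def phi2 : Fin 8 × Fin 8 → ℂ :=
  fun q => if q = (0, 0) ∨ q = (1, 1) then ((1 / Real.sqrt 2 : ℝ) : ℂ) else 0

/-- `ρ̃(λ) = λ ρ^iso₈(0.24) + (1−λ)|φ₂⁺⟩⟨φ₂⁺|`. -/
noncomputable def rhoTilde (l : ℝ) : Matrix (Fin 8 × Fin 8) (Fin 8 × Fin 8) ℂ :=
  (l : ℂ) • isoState 8 0.24 + ((1 - l : ℝ) : ℂ) • Matrix.vecMulVec phi2 (star phi2)

/-- A projective measurement: a finite family of orthogonal projections, mutually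
orthogonal, summing to the identity. -/
def IsProjMeasurement {n : Type*} [Fintype n] [DecidableEq n] {A : Type*} [Fintype A]
    (M : A → Matrix n n ℂ) : Prop :=
  (∀ a, (M a)ᴴ = M a) ∧ (∀ a, M a * M a = M a) ∧
    (∀ a a', a ≠ a' → M a * M a' = 0) ∧ ∑ a, M a = 1

/-- A ±1-valued projective observable: `A = P − Q` with `P, Q` orthogonal projections
and `PQ = 0`. -/
def IsPMObservable {n : Type*} [Fintype n] (A : Matrix n n ℂ) : Prop :=
  ∃ P Q : Matrix n n ℂ,
    Pᴴ = P ∧ P * P = P ∧ Qᴴ = Q ∧ Q * Q = Q ∧ P * Q = 0 ∧ A = P - Q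


lemma trace_sq_le (C : Matrix (Fin 8) (Fin 8) ℂ) :
    ‖C.trace‖ ^ 2 ≤ (C.rank : ℝ) * ∑ i, ∑ j, ‖C i j‖ ^ 2 := by
  let T : EuclideanSpace ℂ (Fin 8) →ₗ[ℂ] EuclideanSpace ℂ (Fin 8) := Matrix.toEuclideanLin C
  let S := LinearMap.range T
  have hr : Module.finrank ℂ S = C.rank := by
    rw [Matrix.rank_eq_finrank_range_toLin C (EuclideanSpace.basisFun (Fin 8) ℂ).toBasis (EuclideanSpace.basisFun (Fin 8) ℂ).toBasis, ← Matrix.toEuclideanLin_eq_toLin_orthonormal]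
  let b := stdOrthonormalBasis ℂ S
  let c : Fin 8 → S := fun j => ⟨T (EuclideanSpace.single j 1), LinearMap.mem_range_self _ _⟩
  have hc : ∀ i j, (c j : EuclideanSpace ℂ (Fin 8)) i = C i j := by
    intro i j
    simp [c, T, Matrix.toLpLin_apply]
  have h1 : ∀ j, C j j = ∑ k, b.repr (c j) k * (b k : EuclideanSpace ℂ (Fin 8)) j := by
    intro j
    rw [← hc j j]
    conv_lhs => rw [← b.sum_repr (c j)]
    simp
  have h2 : ∀ j, ∑ k, ‖b.repr (c j) k‖ ^ 2 = ∑ i, ‖C i j‖ ^ 2 := by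
    intro j
    rw [← EuclideanSpace.norm_sq_eq, LinearIsometryEquiv.norm_map]
    have : ‖c j‖ = ‖(c j : EuclideanSpace ℂ (Fin 8))‖ := rfl
    rw [this, EuclideanSpace.norm_sq_eq]
    simp [hc]
  have h3 : ∀ k, ∑ j, ‖(b k : EuclideanSpace ℂ (Fin 8)) j‖ ^ 2 = 1 := by
    intro k
    rw [← EuclideanSpace.norm_sq_eq]
    have : ‖(b k : EuclideanSpace ℂ (Fin 8))‖ = ‖b k‖ := rfl
    rw [this, b.norm_eq_one]; norm_num
  have h4 : C.trace = ∑ p : Fin 8 × Fin (Module.finrank ℂ S), b.repr (c p.1) p.2 * (b p.2 : EuclideanSpace ℂ (Fin 8)) p.1 := by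
    rw [Fintype.sum_prod_type]
    simp only [Matrix.trace, Matrix.diag]
    exact Finset.sum_congr rfl fun j _ => h1 j
  have h5 : ‖C.trace‖ ≤ ∑ p : Fin 8 × Fin (Module.finrank ℂ S), ‖b.repr (c p.1) p.2‖ * ‖(b p.2 : EuclideanSpace ℂ (Fin 8)) p.1‖ := by
    rw [h4]
    refine (norm_sum_le _ _).trans (le_of_eq ?_)
    simp
  calc ‖C.trace‖ ^ 2 ≤ _ := by gcongr
    _ ≤ _ := Finset.sum_mul_sq_le_sq_mul_sq _ _ _
    _ = _ := by
      rw [Fintype.sum_prod_type, Fintype.sum_prod_type_right]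
      simp only [h2, h3]
      rw [Finset.sum_comm]
      simp [hr, mul_comm]

/-- twice-dimension fidelity functional -/
noncomputable def fid (ρ : Matrix (Fin 8 × Fin 8) (Fin 8 × Fin 8) ℂ) : ℂ :=
  ∑ i, ∑ j, ρ (i, i) (j, j)

lemma fid_vec (ψ : Fin 8 × Fin 8 → ℂ) :
    fid (vecMulVec ψ (star ψ)) = ((‖(Matrix.of fun i j => ψ (i, j)).trace‖ ^ 2 : ℝ) : ℂ) := by
  have h : ∀ z : ℂ, ((‖z‖ ^ 2 : ℝ) : ℂ) = z * star z := by
    intro z; push_cast; rw [← Complex.mul_conj']; rfl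
  rw [h]
  simp [fid, vecMulVec_apply, Matrix.trace, Finset.sum_mul_sum]

lemma trace_vec (ψ : Fin 8 × Fin 8 → ℂ) :
    (vecMulVec ψ (star ψ)).trace = ((∑ i, ∑ j, ‖ψ (i, j)‖ ^ 2 : ℝ) : ℂ) := by
  simp [Matrix.trace, vecMulVec_apply, Fintype.sum_prod_type, Complex.mul_conj']

lemma fid_le (ρ : Matrix (Fin 8 × Fin 8) (Fin 8 × Fin 8) ℂ) (r : ℕ) (h : SchmidtNumberLE ρ r) :
    (fid ρ).re ≤ r * (ρ.trace).re := by
  obtain ⟨k, ψ, h1, rfl⟩ := h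
  have e1 : fid (∑ i, vecMulVec (ψ i) (star (ψ i))) = ∑ i, fid (vecMulVec (ψ i) (star (ψ i))) := by
    simp only [fid, Matrix.sum_apply]
    rw [Finset.sum_comm]
    rw [Finset.sum_comm]
    simp_rw [Finset.sum_comm (s := (Finset.univ : Finset (Fin 8))) (t := (Finset.univ : Finset (Fin k)))]
  rw [e1, Matrix.trace_sum, Complex.re_sum, Complex.re_sum, Finset.mul_sum]
  refine Finset.sum_le_sum fun i _ => ?_
  rw [fid_vec, trace_vec, Complex.ofReal_re, Complex.ofReal_re]
  refine (trace_sq_le _).trans ?_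
  have := h1 i
  unfold schmidtRank at this
  simp only [Matrix.of_apply]
  gcongr

lemma maxEnt8_sq : (((1 / Real.sqrt (8:ℕ) : ℝ) : ℂ)) * ((1 / Real.sqrt (8:ℕ) : ℝ) : ℂ) = 1 / 8 := by
  rw [← Complex.ofReal_mul]
  have : (1 / Real.sqrt (8:ℕ) : ℝ) * (1 / Real.sqrt (8:ℕ)) = 1 / 8 := by
    rw [div_mul_div_comm, Real.mul_self_sqrt (by positivity)]; norm_num
  rw [this]; norm_num

lemma phi2_sq : (((1 / Real.sqrt 2 : ℝ) : ℂ)) * ((1 / Real.sqrt 2 : ℝ) : ℂ) = 1 / 2 := by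
  rw [← Complex.ofReal_mul]
  have : (1 / Real.sqrt 2 : ℝ) * (1 / Real.sqrt 2) = 1 / 2 := by
    rw [div_mul_div_comm, Real.mul_self_sqrt (by positivity)]; norm_num
  rw [this]; norm_num

lemma projME8_apply (i j k l : Fin 8) :
    projME 8 (i, j) (k, l) = if i = j ∧ k = l then 1 / 8 else 0 := by
  simp only [projME, vecMulVec_apply, maxEnt, Pi.star_apply]
  by_cases h1 : i = j <;> by_cases h2 : k = l <;> simp only [h1, h2, if_true, if_false, and_self, and_true, and_false, star_zero, mul_zero, zero_mul]
  rw [← maxEnt8_sq]; congr 1; exact Complex.conj_ofReal _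

lemma phi2_mul (p q : Fin 8 × Fin 8) :
    phi2 p * star (phi2 q) = if (p = (0,0) ∨ p = (1,1)) ∧ (q = (0,0) ∨ q = (1,1)) then 1/2 else 0 := by
  simp only [phi2]
  by_cases h1 : (p = (0,0) ∨ p = (1,1)) <;> by_cases h2 : (q = (0,0) ∨ q = (1,1)) <;> simp only [h1, h2, if_true, if_false, and_self, and_true, and_false, star_zero, mul_zero, zero_mul]
  rw [← phi2_sq]; congr 1; exact Complex.conj_ofReal _

lemma phi2_vec (p q : Fin 8 × Fin 8) :
    vecMulVec phi2 (star phi2) p q = if (p = (0,0) ∨ p = (1,1)) ∧ (q = (0,0) ∨ q = (1,1)) then 1/2 else 0 := by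
  rw [← phi2_mul]; rfl

lemma fid_rho (l : ℝ) : (fid (rhoTilde l)).re = 2 + 0.015 * l := by
  have hp : fid (projME 8) = 8 := by
    simp [fid, projME8_apply]
  have h1 : fid (1 : Matrix (Fin 8 × Fin 8) (Fin 8 × Fin 8) ℂ) = 8 := by
    simp [fid, Matrix.one_apply]
  have h2 : fid (vecMulVec phi2 (star phi2)) = 2 := by
    simp [fid, phi2_vec, Fin.sum_univ_eight]; norm_num
  have : fid (rhoTilde l) = (l:ℂ) * ((0.24:ℝ) * fid (projME 8) + (((1 - 0.24) / (8 ^ 2 : ℝ) : ℝ) : ℂ) * fid 1) + ((1-l:ℝ):ℂ) * fid (vecMulVec phi2 (star phi2)) := by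
    simp only [fid, rhoTilde, isoState, Matrix.add_apply, Matrix.smul_apply, smul_eq_mul, Finset.sum_add_distrib, Finset.mul_sum, mul_add, Nat.cast_ofNat]
  rw [this, hp, h1, h2]
  have : (l:ℂ) * ((0.24:ℝ) * 8 + (((1 - 0.24) / (8 ^ 2 : ℝ) : ℝ) : ℂ) * 8) + ((1-l:ℝ):ℂ) * 2 = ((l * (0.24 * 8 + (1 - 0.24) / (8 ^ 2 : ℝ) * 8) + (1-l) * 2 : ℝ) : ℂ) := by
    push_cast; ring
  rw [this, Complex.ofReal_re]; norm_num; ring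

lemma trace_rho (l : ℝ) : (rhoTilde l).trace = 1 := by
  have hp : (projME 8).trace = 1 := by
    simp [Matrix.trace, projME8_apply, Fintype.sum_prod_type]
  have h2 : (vecMulVec phi2 (star phi2)).trace = 1 := by
    simp [Matrix.trace, phi2_vec, Fintype.sum_prod_type, Fin.sum_univ_eight]; norm_num
  rw [rhoTilde, isoState]
  rw [Matrix.trace_add, Matrix.trace_smul, Matrix.trace_smul, Matrix.trace_add, Matrix.trace_smul, Matrix.trace_smul, hp, h2, Matrix.trace_one]
  simp; ring

lemma not_sn (l : ℝ) (hl0 : 0 < l) (r : ℕ) (h : SchmidtNumberLE (rhoTilde l) r) : 3 ≤ r := by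
  have := fid_le _ _ h
  rw [fid_rho, trace_rho] at this
  simp at this
  by_contra hh
  have : (r:ℝ) ≤ 2 := by exact_mod_cast (by omega : r ≤ 2)
  nlinarith

section SN
variable {m n : Type*} [Fintype m] [Fintype n]

lemma sn_vec (ψ : m × n → ℂ) {r : ℕ} (h : schmidtRank ψ ≤ r) :
    SchmidtNumberLE (vecMulVec ψ (star ψ)) r :=
  ⟨1, fun _ => ψ, fun _ => h, by simp⟩

lemma sn_add {ρ σ : Matrix (m × n) (m × n) ℂ} {r : ℕ} (h : SchmidtNumberLE ρ r)
    (h' : SchmidtNumberLE σ r) : SchmidtNumberLE (ρ + σ) r := by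
  obtain ⟨k, ψ, h1, rfl⟩ := h
  obtain ⟨k', ψ', h1', rfl⟩ := h'
  refine ⟨k + k', Fin.append ψ ψ', ?_, ?_⟩
  · intro i
    refine Fin.addCases (fun i => ?_) (fun i => ?_) i
    · simpa using h1 i
    · simpa using h1' i
  · simp [Fin.sum_univ_add]

lemma sn_smul {ρ : Matrix (m × n) (m × n) ℂ} {r : ℕ} (c : ℝ) (hc : 0 ≤ c)
    (h : SchmidtNumberLE ρ r) : SchmidtNumberLE ((c : ℂ) • ρ) r := by
  classical
  obtain ⟨k, ψ, h1, rfl⟩ := h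
  refine ⟨k, fun i => ((Real.sqrt c : ℝ) : ℂ) • ψ i, fun i => ?_, ?_⟩
  · refine le_trans ?_ (h1 i)
    have : (Matrix.of fun a b => (((Real.sqrt c : ℝ) : ℂ) • ψ i) (a, b)) =
        (Matrix.of fun a b => ψ i (a, b)) * (((Real.sqrt c : ℝ) : ℂ) • (1 : Matrix n n ℂ)) := by
      ext a b; simp
    unfold schmidtRank
    rw [this]
    exact Matrix.rank_mul_le_left _ _
  · rw [Finset.smul_sum]
    refine Finset.sum_congr rfl fun i _ => ?_
    ext a b
    have : (c : ℂ) = ((Real.sqrt c : ℝ) : ℂ) * ((Real.sqrt c : ℝ) : ℂ) := by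
      rw [← Complex.ofReal_mul, Real.mul_self_sqrt hc]
    simp only [Matrix.smul_apply, vecMulVec_apply, Pi.smul_apply, Pi.star_apply, smul_eq_mul, star_mul']
    rw [this, show star ((Real.sqrt c : ℝ) : ℂ) = ((Real.sqrt c : ℝ) : ℂ) from Complex.conj_ofReal _]
    ring

lemma sn_sum {ι : Type*} (s : Finset ι) (ρ : ι → Matrix (m × n) (m × n) ℂ) {r : ℕ}
    (h : ∀ i, SchmidtNumberLE (ρ i) r) : SchmidtNumberLE (∑ i ∈ s, ρ i) r := by
  classical
  induction s using Finset.induction_on with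
  | empty => exact ⟨0, Fin.elim0, fun i => i.elim0, by simp⟩
  | insert a s ha ih => rw [Finset.sum_insert ha]; exact sn_add (h a) ih

end SN

/-- A perfect difference set. -/
def pds : Fin 8 → ZMod 57 := ![0, 1, 3, 13, 32, 36, 43, 52]

lemma pds_sidon : ∀ i j k l : Fin 8, pds i - pds j - pds k + pds l = 0 ↔
    (i = j ∧ k = l) ∨ (i = k ∧ j = l) := by
  decide +kernel

/-- cube root of unity -/
noncomputable def om : ℂ := ⟨-1/2, Real.sqrt 3 / 2⟩

lemma om_sq : om ^ 2 = -1 - om := by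
  have h : Real.sqrt 3 * Real.sqrt 3 = 3 := Real.mul_self_sqrt (by norm_num)
  apply Complex.ext
  · simp [om, pow_two]; nlinarith
  · simp [om, pow_two]; ring

lemma om_star : (starRingEnd ℂ) om = -1 - om := by
  apply Complex.ext
  · simp [om]; norm_num
  · simp [om]

noncomputable def sicV : Matrix (Fin 3) (Fin 8) ℂ :=
  !![0, 0, 0, -1, -om, 1 + om, 1, 1;
     1, 1, 1, 0, 0, 0, -1, -om;
     -1, -om, 1 + om, 1, 1, 1, 0, 0]

noncomputable def sicC : Matrix (Fin 8) (Fin 8) ℂ := sicVᴴ * sicV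

lemma sicC_diag (i : Fin 8) : sicC i i = 2 := by
  have h := om_sq
  fin_cases i <;> simp [sicC, sicV, Matrix.mul_apply, Fin.sum_univ_three, om_star] <;> grind

lemma sicC_off (i j : Fin 8) (hij : i ≠ j) : sicC i j * star (sicC i j) = 1 := by
  have h := om_sq
  fin_cases i <;> fin_cases j <;> first | (exfalso; exact hij rfl) | (simp [sicC, sicV, Matrix.mul_apply, Fin.sum_univ_three, om_star] <;> grind)

noncomputable def isoVec (g : ZMod 57) : Fin 8 × Fin 8 → ℂ :=
  fun p => ZMod.stdAddChar (g * (pds p.1 - pds p.2)) * sicC p.1 p.2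

lemma isoVec_rank (g : ZMod 57) : schmidtRank (isoVec g) ≤ 3 := by
  have : (Matrix.of fun i j => isoVec g (i, j)) =
      (Matrix.diagonal (fun i => (ZMod.stdAddChar (g * pds i) : ℂ)) * sicVᴴ) *
        (sicV * Matrix.diagonal (fun i => (ZMod.stdAddChar (-(g * pds i)) : ℂ))) := by
    rw [Matrix.mul_assoc, ← Matrix.mul_assoc sicVᴴ]
    ext i j
    rw [Matrix.diagonal_mul, Matrix.mul_diagonal]
    simp only [isoVec, Matrix.of_apply, mul_sub, sub_eq_add_neg (g * pds i), AddChar.map_add_eq_mul, sicC]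
    ring
  rw [schmidtRank, this]
  refine (Matrix.rank_mul_le_left _ _).trans ?_
  simpa using Matrix.rank_le_width (Matrix.diagonal (fun i => (ZMod.stdAddChar (g * pds i) : ℂ)) * sicVᴴ)

lemma isoVec_sum (i j k l : Fin 8) : (∑ g, vecMulVec (isoVec g) (star (isoVec g))) (i, j) (k, l) =
    if (i = j ∧ k = l) then 57 * 4 else if (i = k ∧ j = l) then 57 else 0 := by
  have h1 : ∀ g, isoVec g (i, j) * star (isoVec g (k, l)) =
      ZMod.stdAddChar (g * (pds i - pds j - pds k + pds l)) * (sicC i j * star (sicC k l)) := by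
    intro g
    have : star (ZMod.stdAddChar (g * (pds k - pds l)) : ℂ) = ZMod.stdAddChar (-(g * (pds k - pds l))) :=
      (AddChar.map_neg_eq_conj _ _).symm
    simp only [isoVec, star_mul']
    rw [this, show g * (pds i - pds j - pds k + pds l) = g * (pds i - pds j) + -(g * (pds k - pds l)) by ring, AddChar.map_add_eq_mul]
    ring
  simp only [Matrix.sum_apply, vecMulVec_apply, Pi.star_apply, h1]
  rw [← Finset.sum_mul, AddChar.sum_mulShift _ (ZMod.isPrimitive_stdAddChar 57)]
  simp only [pds_sidon, ZMod.card]
  by_cases h : i = j ∧ k = l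
  · obtain ⟨rfl, rfl⟩ := h
    simp [sicC_diag]; norm_num
  · by_cases h' : i = k ∧ j = l
    · obtain ⟨rfl, rfl⟩ := h'
      have : i ≠ j := fun e => h ⟨e, e⟩
      rw [if_pos (Or.inr ⟨rfl, rfl⟩), if_neg h, if_pos ⟨rfl, rfl⟩, sicC_off _ _ this]; simp
    · simp [h, h']

lemma iso_eq : isoState 8 0.24 = ((0.0075 / 57 : ℝ) : ℂ) • ∑ g, vecMulVec (isoVec g) (star (isoVec g)) +
    ∑ p : Fin 8 × Fin 8, (((if p.1 = p.2 then 0.011875 else 0.004375 : ℝ)) : ℂ) •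
      vecMulVec (Pi.single p (1:ℂ)) (star (Pi.single p (1:ℂ))) := by
  have h2 : (∑ p : Fin 8 × Fin 8, (((if p.1 = p.2 then 0.011875 else 0.004375 : ℝ)) : ℂ) •
      vecMulVec (Pi.single p (1:ℂ)) (star (Pi.single p (1:ℂ)))) =
      Matrix.diagonal (fun p : Fin 8 × Fin 8 => (((if p.1 = p.2 then 0.011875 else 0.004375 : ℝ)) : ℂ)) := by
    ext p q
    simp only [Matrix.sum_apply, Matrix.smul_apply, vecMulVec_apply, Pi.star_apply, Pi.single_apply, Matrix.diagonal_apply, smul_eq_mul]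
    rw [Finset.sum_eq_single p]
    · by_cases h : p = q
      · simp [h]
      · simp [h, Ne.symm h]
    · intro b _ hb
      simp [Ne.symm hb]
    · simp
  rw [h2]
  ext ⟨i, j⟩ ⟨k, l⟩
  rw [Matrix.add_apply, Matrix.smul_apply, isoVec_sum]
  simp only [isoState, Matrix.add_apply, Matrix.smul_apply, projME8_apply, Matrix.diagonal_apply, Matrix.one_apply, Prod.mk.injEq, smul_eq_mul]
  by_cases h : i = j <;> by_cases h' : k = l <;> by_cases h3 : i = k <;> by_cases h4 : j = l <;> 
    simp [h, h', h3, h4] <;> first | (exfalso; simp_all; done) | (norm_num; done) | (norm_num; exact fun e => h' e.symm) | (have h5 : ¬ i = l := h4 ▸ h; simp [h5])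

lemma sn_rho (l : ℝ) (hl0 : 0 < l) (hl1 : l < 0.312) : SchmidtNumberLE (rhoTilde l) 3 := by
  rw [rhoTilde, iso_eq]
  have hs : ∀ p : Fin 8 × Fin 8, schmidtRank (Pi.single p (1:ℂ)) ≤ 3 := by
    intro p
    have : (Matrix.of fun i j => (Pi.single p (1:ℂ) : Fin 8 × Fin 8 → ℂ) (i, j)) =
      vecMulVec (Pi.single p.1 1) (Pi.single p.2 1) := by
      ext i j
      simp only [Matrix.of_apply, vecMulVec_apply, Pi.single_apply, Prod.ext_iff]
      by_cases h : i = p.1 <;> by_cases h' : j = p.2 <;> simp [h, h']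
    rw [schmidtRank, this]
    exact (Matrix.rank_vecMulVec_le _ _).trans (by norm_num)
  have hphi : schmidtRank phi2 ≤ 3 := by
    have : (Matrix.of fun i j => phi2 (i, j)) =
      (Matrix.of fun (i : Fin 8) (k : Fin 2) => if i.val = k.val then ((1 / Real.sqrt 2 : ℝ) : ℂ) else 0) *
      (Matrix.of fun (k : Fin 2) (i : Fin 8) => if i.val = k.val then (1:ℂ) else 0) := by
      ext i j
      simp only [Matrix.of_apply, Matrix.mul_apply, Fin.sum_univ_two, phi2, Prod.mk.injEq]
      fin_cases i <;> fin_cases j <;> simp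
    rw [schmidtRank, this]
    refine (Matrix.rank_mul_le_left _ _).trans ?_
    refine (Matrix.rank_le_width _).trans (by norm_num)
  refine sn_add (sn_smul l hl0.le (sn_add (sn_smul _ (by norm_num) (sn_sum _ _ fun g => sn_vec _ (isoVec_rank g))) (sn_sum _ _ fun p => sn_smul _ ?_ (sn_vec _ (hs p))))) (sn_smul _ (by linarith) (sn_vec _ hphi))
  split_ifs <;> norm_num

lemma part_a (l : ℝ) (hl0 : 0 < l) (hl1 : l < 0.312) : schmidtNumber (rhoTilde l) = 3 := by
  refine le_antisymm (Nat.sInf_le (sn_rho l hl0 hl1)) ?_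
  exact le_csInf ⟨3, sn_rho l hl0 hl1⟩ fun r hr => not_sn l hl0 r hr

lemma tr_projME (A B : Matrix (Fin 8) (Fin 8) ℂ) :
    ((A ⊗ₖ B) * projME 8).trace = 1 / 8 * ∑ i, ∑ j, A i j * B i j := by
  simp only [Matrix.trace, Matrix.diag, Matrix.mul_apply, Fintype.sum_prod_type, projME8_apply, Matrix.kroneckerMap_apply]
  have : ∀ i j : Fin 8, (∑ k : Fin 8, ∑ l : Fin 8, A i k * B j l * (if k = l ∧ i = j then 1 / 8 else 0 : ℂ)) =
      if i = j then ∑ k, 1 / 8 * (A i k * B i k) else 0 := by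
    intro i j
    by_cases h : i = j
    · subst h
      simp [mul_comm]
    · simp [h]
  simp only [this]
  simp [Finset.mul_sum]

lemma tr_phi2 (K : Matrix (Fin 8 × Fin 8) (Fin 8 × Fin 8) ℂ) :
    (K * vecMulVec phi2 (star phi2)).trace = star phi2 ⬝ᵥ (K *ᵥ phi2) := by
  rw [Matrix.mul_vecMulVec, Matrix.trace_vecMulVec, dotProduct_comm]

lemma phi2_val (A B : Matrix (Fin 8) (Fin 8) ℂ) :
    star phi2 ⬝ᵥ ((A ⊗ₖ B) *ᵥ phi2) = 1 / 2 * (A 0 0 * B 0 0 + A 0 1 * B 0 1 + A 1 0 * B 1 0 + A 1 1 * B 1 1) := by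
  rw [← tr_phi2]
  simp only [Matrix.trace, Matrix.diag, Matrix.mul_apply, Fintype.sum_prod_type, phi2_vec, Matrix.kroneckerMap_apply, Prod.mk.injEq]
  simp [Fin.sum_univ_eight]
  ring

lemma tr_iso (A B : Matrix (Fin 8) (Fin 8) ℂ) :
    ((A ⊗ₖ B) * isoState 8 0.24).trace = 0.03 * ∑ i, ∑ j, A i j * B i j + 0.011875 * (A.trace * B.trace) := by
  rw [isoState, Matrix.mul_add, Matrix.mul_smul, Matrix.mul_smul, Matrix.trace_add, Matrix.trace_smul, Matrix.trace_smul, tr_projME,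
    Matrix.mul_one, Matrix.trace_kronecker]
  simp only [smul_eq_mul]
  push_cast
  ring

lemma tr_rho (l : ℝ) (A B : Matrix (Fin 8) (Fin 8) ℂ) :
    ((A ⊗ₖ B) * rhoTilde l).trace = l * ((A ⊗ₖ B) * isoState 8 0.24).trace +
      ((1 - l : ℝ) : ℂ) * (star phi2 ⬝ᵥ ((A ⊗ₖ B) *ᵥ phi2)) := by
  rw [rhoTilde, Matrix.mul_add, Matrix.mul_smul, Matrix.mul_smul, Matrix.trace_add, Matrix.trace_smul, Matrix.trace_smul, tr_phi2]
  simp only [smul_eq_mul]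

noncomputable def obs (x z : ℂ) : Matrix (Fin 8) (Fin 8) ℂ :=
  !![z, x, 0, 0, 0, 0, 0, 0;
     x, -z, 0, 0, 0, 0, 0, 0;
     0, 0, 1, 0, 0, 0, 0, 0;
     0, 0, 0, 1, 0, 0, 0, 0;
     0, 0, 0, 0, 1, 0, 0, 0;
     0, 0, 0, 0, 0, 1, 0, 0;
     0, 0, 0, 0, 0, 0, 1, 0;
     0, 0, 0, 0, 0, 0, 0, 1]

lemma pm_of_sq (A : Matrix (Fin 8) (Fin 8) ℂ) (h : Aᴴ = A) (h2 : A * A = 1) : IsPMObservable A := by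
  refine ⟨(1/2 : ℂ) • (1 + A), (1/2 : ℂ) • (1 - A), ?_, ?_, ?_, ?_, ?_, ?_⟩
  · simp [h]
  · rw [Matrix.smul_mul, Matrix.mul_smul, smul_smul]
    have : (1 + A) * (1 + A) = (2:ℂ) • (1 + A) := by
      rw [mul_add, add_mul, add_mul, h2, two_smul]; simp; abel
    rw [this, smul_smul]; norm_num
  · simp [h]
  · rw [Matrix.smul_mul, Matrix.mul_smul, smul_smul]
    have : (1 - A) * (1 - A) = (2:ℂ) • (1 - A) := by
      rw [mul_sub, sub_mul, sub_mul, h2, two_smul]; simp; abel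
    rw [this, smul_smul]; norm_num
  · rw [Matrix.smul_mul, Matrix.mul_smul, smul_smul]
    have : (1 + A) * (1 - A) = 0 := by
      rw [mul_sub, add_mul, add_mul, h2]; simp; abel
    rw [this]; simp
  · rw [← smul_sub]
    have : (1 + A) - (1 - A) = (2:ℂ) • A := by rw [two_smul]; abel
    rw [this, smul_smul]; norm_num

lemma obs_pm (x z : ℝ) (h : x ^ 2 + z ^ 2 = 1) : IsPMObservable (obs x z) := by
  have h' : (x:ℂ) * x + z * z = 1 := by rw [← pow_two, ← pow_two]; exact_mod_cast h
  apply pm_of_sq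
  · ext i j
    fin_cases i <;> fin_cases j <;> simp [obs]
  · ext i j
    rw [Matrix.mul_apply, Fin.sum_univ_eight]
    fin_cases i <;> fin_cases j <;> simp [obs, Matrix.one_apply] <;> first | linear_combination h' | ring

lemma obs_rho (l : ℝ) (x z x' z' : ℂ) : ((obs x z ⊗ₖ obs x' z') * rhoTilde l).trace =
    l * (0.03 * (2 * (x * x' + z * z') + 6) + 0.011875 * 36) + (1 - l) * (x * x' + z * z') := by
  rw [tr_rho, tr_iso, phi2_val]
  have h1 : ∀ x z : ℂ, (obs x z).trace = 6 := by
    intro x z; simp [Matrix.trace, Fin.sum_univ_eight, obs]; norm_num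
  have h2 : ∑ i, ∑ j, obs x z i j * obs x' z' i j = 2 * (x * x' + z * z') + 6 := by
    simp [Fin.sum_univ_eight, obs]; ring
  rw [h1, h1, h2]
  have h3 : ∀ x z : ℂ, obs x z 0 0 = z ∧ obs x z 0 1 = x ∧ obs x z 1 0 = x ∧ obs x z 1 1 = -z := by
    intro x z; simp [obs]
  obtain ⟨a1, a2, a3, a4⟩ := h3 x z
  obtain ⟨b1, b2, b3, b4⟩ := h3 x' z'
  rw [a1, a2, a3, a4, b1, b2, b3, b4]
  push_cast; ring

lemma part_b (l : ℝ) (hl0 : 0 < l) (hl1 : l < 0.312) :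
    (∃ A₀ A₁ B₀ B₁ : Matrix (Fin 8) (Fin 8) ℂ,
      IsPMObservable A₀ ∧ IsPMObservable A₁ ∧ IsPMObservable B₀ ∧ IsPMObservable B₁ ∧
      (2 : ℂ) < Matrix.trace
        (rhoTilde l * (A₀ ⊗ₖ B₀ + A₀ ⊗ₖ B₁ + A₁ ⊗ₖ B₀ - A₁ ⊗ₖ B₁))) := by
  refine ⟨obs (0:ℝ) (1:ℝ), obs (1:ℝ) (0:ℝ), obs (3/5:ℝ) (4/5:ℝ), obs (-3/5:ℝ) (4/5:ℝ), obs_pm _ _ (by norm_num), obs_pm _ _ (by norm_num), obs_pm _ _ (by norm_num), obs_pm _ _ (by norm_num), ?_⟩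
  rw [Matrix.trace_mul_comm, Matrix.sub_mul, Matrix.add_mul, Matrix.add_mul, Matrix.trace_sub, Matrix.trace_add, Matrix.trace_add,
    obs_rho, obs_rho, obs_rho, obs_rho]
  have : (2:ℂ) < ((l * 1.383 + (1 - l) * 2.8 : ℝ) : ℂ) := by
    have : (2:ℂ) = ((2:ℝ):ℂ) := by norm_num
    rw [this, Complex.real_lt_real]
    linarith
  convert this using 1
  push_cast; ring

section Gauss
open MeasureTheory Set

/-- one-dimensional complex Gaussian density -/
noncomputable def gd (z : ℂ) : ℝ := Real.pi⁻¹ * Real.exp (-‖z‖ ^ 2)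

/-- eight-dimensional complex Gaussian density -/
noncomputable def gw (z : Fin 8 → ℂ) : ℝ := ∏ i, gd (z i)

/-- the complex Gaussian measure -/
noncomputable def gam : Measure (Fin 8 → ℂ) := volume.withDensity fun z => ENNReal.ofReal (gw z)

lemma gd_pos (z : ℂ) : 0 ≤ gd z := by unfold gd; positivity
lemma gw_nonneg (z : Fin 8 → ℂ) : 0 ≤ gw z := Finset.prod_nonneg fun i _ => gd_pos _
lemma gd_cont : Continuous gd := by unfold gd; fun_prop
lemma gw_cont : Continuous gw := by
  unfold gw; exact continuous_finsetProd _ fun i _ => gd_cont.comp (continuous_apply i)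

lemma gd_int : ∫ z, gd z = 1 := by
  have := Complex.integral_rpow_mul_exp_neg_rpow (p := 2) (q := 0) (by norm_num) (by norm_num)
  simp only [Real.rpow_zero, one_mul] at this
  unfold gd
  rw [integral_const_mul]
  have h2 : ∀ x : ℂ, ‖x‖ ^ (2:ℝ) = ‖x‖ ^ 2 := fun x => by norm_cast
  simp only [h2] at this
  rw [this]; norm_num

lemma gd_int2 : ∫ z, ‖z‖ ^ 2 * gd z = 1 := by
  have := Complex.integral_rpow_mul_exp_neg_rpow (p := 2) (q := 2) (by norm_num) (by norm_num)
  have h2 : ∀ x : ℂ, ‖x‖ ^ (2:ℝ) = ‖x‖ ^ 2 := fun x => by norm_cast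
  simp only [h2] at this
  have h3 : ∀ z, ‖z‖ ^ 2 * gd z = Real.pi⁻¹ * (‖z‖ ^ 2 * Real.exp (-‖z‖ ^ 2)) := by
    intro z; unfold gd; ring
  simp only [h3]
  rw [integral_const_mul, this]
  norm_num

lemma gd_integrable : Integrable gd := .of_integral_ne_zero (by rw [gd_int]; norm_num)
lemma gd_integrable2 : Integrable (fun z => ‖z‖ ^ 2 * gd z) :=
  .of_integral_ne_zero (by rw [gd_int2]; norm_num)

lemma integral_gam {E : Type*} [NormedAddCommGroup E] [NormedSpace ℝ E] (f : (Fin 8 → ℂ) → E) :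
    ∫ z, f z ∂gam = ∫ z, gw z • f z := by
  unfold gam
  rw [integral_withDensity_eq_integral_toReal_smul (by exact (gw_cont.measurable).ennreal_ofReal) (by simp)]
  simp [ENNReal.toReal_ofReal (gw_nonneg _)]

lemma integrable_gam {E : Type*} [NormedAddCommGroup E] [NormedSpace ℝ E] (f : (Fin 8 → ℂ) → E) :
    Integrable f gam ↔ Integrable (fun z => gw z • f z) := by
  unfold gam
  rw [integrable_withDensity_iff_integrable_smul' (by exact (gw_cont.measurable).ennreal_ofReal) (by simp)]
  simp [ENNReal.toReal_ofReal (gw_nonneg _)]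

lemma gw_int : ∫ z, gw z = 1 := by
  unfold gw
  rw [integral_fintype_prod_volume_eq_pow gd, gd_int]; simp

instance gam_prob : IsProbabilityMeasure gam := by
  constructor
  unfold gam
  rw [withDensity_apply _ MeasurableSet.univ, Measure.restrict_univ,
    ← ofReal_integral_eq_lintegral_ofReal (.of_integral_ne_zero (by rw [gw_int]; norm_num)) (.of_forall gw_nonneg), gw_int]
  simp

/-- factors of the weighted density -/
noncomputable def gfac (i j : Fin 8) (w : ℂ) : ℝ := if j = i then ‖w‖ ^ 2 * gd w else gd w

lemma gw_mul_sq (i : Fin 8) (z : Fin 8 → ℂ) : gw z • ‖z i‖ ^ 2 =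
    ∏ j, gfac i j (z j) := by
  unfold gw gfac
  have : ∀ j, (if j = i then ‖z j‖ ^ 2 * gd (z j) else gd (z j)) = gd (z j) * (if j = i then ‖z j‖ ^ 2 else 1) := by
    intro j; split_ifs <;> ring
  simp only [this, Finset.prod_mul_distrib]
  simp

lemma gam_sq_integrable (i : Fin 8) : Integrable (fun z : Fin 8 → ℂ => ‖z i‖ ^ 2) gam := by
  rw [integrable_gam]
  simp only [gw_mul_sq]
  refine Integrable.fintype_prod (f := gfac i) (μ := fun _ => volume) fun j => ?_
  by_cases h : j = i
  · have e : gfac i j = fun w => ‖w‖ ^ 2 * gd w := by ext w; simp [gfac, h]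
    rw [e]; exact gd_integrable2
  · have e : gfac i j = gd := by ext w; simp [gfac, h]
    rw [e]; exact gd_integrable

lemma gam_sq (i : Fin 8) : ∫ z, ‖z i‖ ^ 2 ∂gam = 1 := by
  rw [integral_gam]
  simp only [gw_mul_sq]
  rw [integral_fintype_prod_volume_eq_prod (gfac i)]
  refine Finset.prod_eq_one fun j _ => ?_
  by_cases h : j = i
  · simpa [gfac, h] using gd_int2
  · simpa [gfac, h] using gd_int

lemma norm_sq_unitary (U : Matrix (Fin 8) (Fin 8) ℂ) (hU : Uᴴ * U = 1) (z : Fin 8 → ℂ) :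
    ∑ i, ‖(U *ᵥ z) i‖ ^ 2 = ∑ i, ‖z i‖ ^ 2 := by
  have h : ∀ w : Fin 8 → ℂ, ((∑ i, ‖w i‖ ^ 2 : ℝ) : ℂ) = star w ⬝ᵥ w := by
    intro w
    simp [dotProduct, Complex.conj_mul']
  have : star (U *ᵥ z) ⬝ᵥ (U *ᵥ z) = star z ⬝ᵥ z := by
    rw [Matrix.star_mulVec, Matrix.dotProduct_mulVec, Matrix.vecMul_vecMul, hU, Matrix.vecMul_one]
  rw [← h, ← h] at this
  exact_mod_cast this

lemma gw_eq (z : Fin 8 → ℂ) : gw z = Real.pi⁻¹ ^ 8 * Real.exp (-∑ i, ‖z i‖ ^ 2) := by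
  simp [gw, gd, Finset.prod_mul_distrib, ← Real.exp_sum]

lemma gam_unitary (U : Matrix (Fin 8) (Fin 8) ℂ) (hU : Uᴴ * U = 1) :
    MeasurePreserving (fun z => U *ᵥ z) gam gam := by
  let L : (Fin 8 → ℂ) →ₗ[ℝ] (Fin 8 → ℂ) := (Matrix.mulVecLin U).restrictScalars ℝ
  let L' : (Fin 8 → ℂ) →ₗ[ℝ] (Fin 8 → ℂ) := (Matrix.mulVecLin Uᴴ).restrictScalars ℝ
  have hL : ⇑L = fun z => U *ᵥ z := by ext z; simp [L]
  have hLL : L'.comp L = LinearMap.id := by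
    refine LinearMap.ext fun z => ?_
    simp [L, L', hU]
  have hdet : LinearMap.det L ≠ 0 := by
    intro h0
    have := congrArg LinearMap.det hLL
    rw [LinearMap.det_comp, h0] at this
    simp at this
  have hm : Measurable L := L.continuous_of_finiteDimensional.measurable
  have hmap := Measure.map_linearMap_addHaar_eq_smul_addHaar (volume : Measure (Fin 8 → ℂ)) hdet
  set c := ENNReal.ofReal |(LinearMap.det L)⁻¹|
  have key : Measure.map L gam = c • gam := by
    ext s hs
    rw [Measure.map_apply hm hs]
    unfold gam
    rw [withDensity_apply _ (hm hs), Measure.smul_apply, withDensity_apply _ hs]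
    have e : ∀ z, ENNReal.ofReal (gw z) = ENNReal.ofReal (gw (L z)) := by
      intro z
      rw [gw_eq, gw_eq, hL, norm_sq_unitary U hU]
    have h1 : ∫⁻ z in L ⁻¹' s, ENNReal.ofReal (gw z) = ∫⁻ z in L ⁻¹' s, ENNReal.ofReal (gw (L z)) := by
      exact lintegral_congr e
    rw [h1, ← setLIntegral_map (f := fun z => ENNReal.ofReal (gw z)) hs (by exact (gw_cont.measurable).ennreal_ofReal) hm, hmap,
      Measure.restrict_smul, lintegral_smul_measure]
  have hc : c = 1 := by
    have := congrArg (fun μ => μ Set.univ) key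
    simp only [Measure.map_apply hm MeasurableSet.univ, Measure.smul_apply] at this
    simpa using this.symm
  rw [← hL]
  refine ⟨hm, ?_⟩
  rw [key, hc, one_smul]

lemma gd_cdf (t : ℝ) (ht : 0 < t) : ∫ z, (if ‖z‖ ^ 2 ≤ t then gd z else 0) = 1 - Real.exp (-t) := by
  have := MeasureTheory.integral_fun_norm_addHaar (volume : Measure ℂ) (fun y : ℝ => if y ^ 2 ≤ t then Real.pi⁻¹ * Real.exp (-y ^ 2) else 0)
  unfold gd
  rw [this]
  have hv : (volume : Measure ℂ).real (Metric.ball 0 1) = Real.pi := by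
    simp [Measure.real, Complex.volume_ball]
  rw [hv, Complex.finrank_real_complex]
  have hset : ∫ y in Ioi (0:ℝ), y ^ (2 - 1) • (if y ^ 2 ≤ t then Real.pi⁻¹ * Real.exp (-y ^ 2) else 0) =
      ∫ y in (0:ℝ)..Real.sqrt t, y * (Real.pi⁻¹ * Real.exp (-y ^ 2)) := by
    rw [intervalIntegral.integral_of_le (Real.sqrt_nonneg _)]
    rw [← integral_indicator measurableSet_Ioi, ← integral_indicator measurableSet_Ioc]
    congr 1
    ext y
    simp only [indicator, mem_Ioi, mem_Ioc]
    by_cases h : 0 < y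
    · simp [h, Real.le_sqrt' h]
    · simp [h]
  rw [hset]
  have hF : ∀ y ∈ uIcc 0 (Real.sqrt t), HasDerivAt (fun y : ℝ => -(Real.pi⁻¹ / 2) * Real.exp (-y ^ 2)) (y * (Real.pi⁻¹ * Real.exp (-y ^ 2))) y := by
    intro y _
    have : HasDerivAt (fun y : ℝ => -y ^ 2) (-(2 * y)) y := by
      simpa using (hasDerivAt_pow 2 y).fun_neg
    refine ((this.exp).const_mul (-(Real.pi⁻¹ / 2))).congr_deriv ?_
    ring
  rw [intervalIntegral.integral_eq_sub_of_hasDerivAt hF (by apply Continuous.intervalIntegrable; fun_prop)]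
  rw [Real.sq_sqrt ht.le]
  simp
  field_simp
  ring

/-- largest squared coordinate -/
noncomputable def mx (z : Fin 8 → ℂ) : ℝ := Finset.univ.sup' Finset.univ_nonempty fun i => ‖z i‖ ^ 2

lemma mx_cont : Continuous mx := by
  unfold mx
  exact Continuous.finset_sup'_apply _ fun i _ => by fun_prop

lemma mx_integrable : Integrable mx gam := by
  have h : Integrable (fun z : Fin 8 → ℂ => ∑ i, ‖z i‖ ^ 2) gam :=
    integrable_finsetSum _ fun i _ => gam_sq_integrable i
  refine h.mono mx_cont.aestronglyMeasurable (.of_forall fun z => ?_)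
  have h1 : 0 ≤ mx z := (by positivity : (0:ℝ) ≤ ‖z 0‖ ^ 2).trans (Finset.le_sup' (fun i => ‖z i‖ ^ 2) (Finset.mem_univ 0))
  rw [Real.norm_of_nonneg h1, Real.norm_of_nonneg (by positivity)]
  unfold mx
  refine Finset.sup'_le _ _ fun i hi => ?_
  exact Finset.single_le_sum (f := fun i => ‖z i‖ ^ 2) (fun i _ => by positivity) hi

lemma mx_tail (t : ℝ) (ht : 0 < t) : gam.real {z | t < mx z} = 1 - (1 - Real.exp (-t)) ^ 8 := by
  have hms : MeasurableSet {z | mx z ≤ t} := measurableSet_le mx_cont.measurable measurable_const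
  have hc : {z | t < mx z} = {z | mx z ≤ t}ᶜ := by ext z; simp
  rw [hc, probReal_compl_eq_one_sub hms, ← integral_indicator_one hms, integral_gam]
  congr 1
  have hp := integral_fintype_prod_volume_eq_pow (ι := Fin 8) (fun z : ℂ => (if ‖z‖ ^ 2 ≤ t then gd z else 0))
  rw [Fintype.card_fin] at hp
  rw [← gd_cdf t ht, ← hp]
  congr 1
  ext z
  by_cases h : mx z ≤ t
  · have h' : ∀ i, ‖z i‖ ^ 2 ≤ t := fun i => (Finset.le_sup' (fun i => ‖z i‖ ^ 2) (Finset.mem_univ i)).trans h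
    simp [h, h', gw]
  · have h' : ∃ i, ¬ ‖z i‖ ^ 2 ≤ t := by
      by_contra! h2
      exact h (Finset.sup'_le _ _ fun i _ => h2 i)
    obtain ⟨i, hi⟩ := h'
    rw [Finset.prod_eq_zero (Finset.mem_univ i) (by simp [hi])]
    simp [h]

lemma mx_mean : ∫ z, mx z ∂gam = 761 / 280 := by
  rw [mx_integrable.integral_eq_integral_meas_lt]
  · rw [setIntegral_congr_fun measurableSet_Ioi (fun t ht => mx_tail t ht)]
    have hI : ∀ k : ℕ, ∫ t in Ioi (0:ℝ), Real.exp ((-(k+1:ℝ)) * t) = 1 / (k+1) := by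
      intro k
      rw [integral_exp_mul_Ioi (by linarith [(Nat.cast_nonneg k : (0:ℝ) ≤ k)])]
      rw [mul_zero, Real.exp_zero, neg_div_neg_eq]
    let c : Fin 8 → ℝ := ![8, -28, 56, -70, 56, -28, 8, -1]
    have he : ∀ t : ℝ, 1 - (1 - Real.exp (-t)) ^ 8 = ∑ k : Fin 8, c k * Real.exp ((-((k:ℕ)+1:ℝ)) * t) := by
      intro t
      have : ∀ k : ℕ, Real.exp ((-(k+1:ℝ)) * t) = Real.exp (-t) ^ (k+1) := by
        intro k; rw [← Real.exp_nat_mul]; congr 1; push_cast; ring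
      simp only [this]
      simp [Fin.sum_univ_eight, c]
      ring
    simp only [he]
    rw [integral_finsetSum]
    · simp only [integral_const_mul, hI]
      simp [Fin.sum_univ_eight, c]
      norm_num
    · intro k _
      exact (integrableOn_exp_mul_Ioi (by linarith [(Nat.cast_nonneg (k:ℕ) : (0:ℝ) ≤ (k:ℕ))]) 0).const_mul _
  · refine .of_forall fun z => ?_
    exact (by positivity : (0:ℝ) ≤ ‖z 0‖ ^ 2).trans (Finset.le_sup' (fun i => ‖z i‖ ^ 2) (Finset.mem_univ 0))

end Gauss

section Model
open MeasureTheory Set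

lemma gam_int_unitary (U : Matrix (Fin 8) (Fin 8) ℂ) (hU : Uᴴ * U = 1) (f : (Fin 8 → ℂ) → ℂ)
    (hf : Measurable f) : ∫ z, f (U *ᵥ z) ∂gam = ∫ z, f z ∂gam := by
  have h := gam_unitary U hU
  conv_rhs => rw [← h.map_eq]
  rw [integral_map h.measurable.aemeasurable hf.aestronglyMeasurable]

open Classical in
/-- indicator that coordinate `i` is maximal -/
noncomputable def im (i : Fin 8) (w : Fin 8 → ℂ) : ℝ := if ∀ j, ‖w j‖ ≤ ‖w i‖ then 1 else 0

/-- the response function -/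
noncomputable def rr (i : Fin 8) (w : Fin 8 → ℂ) : ℝ := im i w / ∑ k, im k w

lemma im_nonneg (i w) : 0 ≤ im i w := by unfold im; split_ifs <;> norm_num

lemma im_sum_pos (w) : 0 < ∑ k, im k w := by
  obtain ⟨i, hi⟩ := Finite.exists_max (fun i => ‖w i‖)
  refine Finset.sum_pos' (fun i _ => im_nonneg i w) ⟨i, Finset.mem_univ _, ?_⟩
  simp [im, hi]

lemma rr_nonneg (i w) : 0 ≤ rr i w := div_nonneg (im_nonneg i w) (im_sum_pos w).le

lemma rr_sum (w) : ∑ i, rr i w = 1 := by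
  unfold rr
  rw [← Finset.sum_div, div_self (im_sum_pos w).ne']

lemma rr_le_one (i w) : rr i w ≤ 1 := by
  rw [← rr_sum w]
  exact Finset.single_le_sum (f := fun i => rr i w) (fun i _ => rr_nonneg i w) (Finset.mem_univ i)

lemma im_meas (i) : Measurable (im i) := by
  unfold im
  refine Measurable.ite ?_ measurable_const measurable_const
  have : {w : Fin 8 → ℂ | ∀ j, ‖w j‖ ≤ ‖w i‖} = ⋂ j, {w | ‖w j‖ ≤ ‖w i‖} := by ext; simp
  rw [this]
  exact MeasurableSet.iInter fun j => measurableSet_le (by fun_prop) (by fun_prop)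

lemma rr_meas (i) : Measurable (rr i) :=
  (im_meas i).div (Finset.measurable_fun_sum _ fun k _ => im_meas k)

lemma rr_perm (σ : Equiv.Perm (Fin 8)) (w w' : Fin 8 → ℂ) (h : ∀ j, ‖w' (σ j)‖ = ‖w j‖) (i) :
    rr (σ i) w' = rr i w := by
  have h1 : ∀ i, im (σ i) w' = im i w := by
    intro i
    unfold im
    have : (∀ j, ‖w' j‖ ≤ ‖w' (σ i)‖) ↔ ∀ j, ‖w j‖ ≤ ‖w i‖ := by
      rw [← σ.forall_congr_right (q := fun j => ‖w' j‖ ≤ ‖w' (σ i)‖)]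
      simp only [h]
    simp only [this]
  unfold rr
  rw [h1, ← Equiv.sum_comp σ]
  simp only [h1]

lemma rr_mx (w) : ∑ i, rr i w * ‖w i‖ ^ 2 = mx w := by
  have : ∀ i, rr i w * ‖w i‖ ^ 2 = rr i w * mx w := by
    intro i
    by_cases h : ∀ j, ‖w j‖ ≤ ‖w i‖
    · congr 1
      refine le_antisymm (Finset.le_sup' (fun i => ‖w i‖ ^ 2) (Finset.mem_univ i)) (Finset.sup'_le _ _ fun j _ => ?_)
      have := h j
      gcongr
    · have : rr i w = 0 := by simp only [rr, im, if_neg h, zero_div]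
      rw [this]; simp
  simp only [this]
  rw [← Finset.sum_mul, rr_sum, one_mul]

/-- the moment integrals -/
noncomputable def kk (i j k : Fin 8) : ℂ := ∫ w, (rr i w : ℂ) * (star (w j) * w k) ∂gam

lemma kk_meas (i j k : Fin 8) : Measurable (fun w : Fin 8 → ℂ => (rr i w : ℂ) * (star (w j) * w k)) := by
  have := rr_meas i
  have h2 : Measurable (fun w : Fin 8 → ℂ => star (w j) * w k) := by
    apply Continuous.measurable; fun_prop
  exact (Complex.measurable_ofReal.comp this).mul h2

lemma kk_integrable (i j k : Fin 8) : Integrable (fun w : Fin 8 → ℂ => (rr i w : ℂ) * (star (w j) * w k)) gam := by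
  refine ((gam_sq_integrable j).add (gam_sq_integrable k)).mono (kk_meas i j k).aestronglyMeasurable (.of_forall fun w => ?_)
  simp only [Pi.add_apply]
  rw [Real.norm_of_nonneg (by positivity), norm_mul, norm_mul, norm_star, Complex.norm_real, Real.norm_of_nonneg (rr_nonneg i w)]
  have h1 := rr_le_one i w
  have h0 := rr_nonneg i w
  have h2 : 0 ≤ ‖w j‖ * ‖w k‖ := by positivity
  nlinarith [sq_nonneg (‖w j‖ - ‖w k‖), sq_nonneg (‖w j‖ + ‖w k‖)]

lemma kk_off (i j k : Fin 8) (h : j ≠ k) : kk i j k = 0 := by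
  let D : Matrix (Fin 8) (Fin 8) ℂ := Matrix.diagonal fun l => if l = j then -1 else 1
  have hD : Dᴴ * D = 1 := by
    simp only [D, Matrix.diagonal_conjTranspose, Matrix.diagonal_mul_diagonal]
    rw [← Matrix.diagonal_one]
    congr 1
    ext l
    by_cases hl : l = j <;> simp [hl]
  have := gam_int_unitary D hD _ (kk_meas i j k)
  have hv : ∀ (z : Fin 8 → ℂ) l, (D *ᵥ z) l = (if l = j then -1 else 1) * z l := by
    intro z l; simp only [D, Matrix.mulVec_diagonal]
  have h1 : ∀ z : Fin 8 → ℂ, rr i (D *ᵥ z) = rr i z := by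
    intro z
    refine rr_perm 1 _ _ (fun l => ?_) i
    rw [Equiv.Perm.one_apply, hv]
    by_cases hl : l = j <;> simp [hl]
  have h2 : ∀ z : Fin 8 → ℂ, (rr i (D *ᵥ z) : ℂ) * (star ((D *ᵥ z) j) * (D *ᵥ z) k) = -((rr i z : ℂ) * (star (z j) * z k)) := by
    intro z
    rw [h1, hv, hv]
    simp [Ne.symm h]
  simp only [h2] at this
  rw [integral_neg] at this
  unfold kk
  linear_combination (-1/2 : ℂ) * this

lemma kk_perm (σ : Equiv.Perm (Fin 8)) (i j : Fin 8) : kk (σ i) (σ j) (σ j) = kk i j j := by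
  let D : Matrix (Fin 8) (Fin 8) ℂ := (1 : Matrix (Fin 8) (Fin 8) ℂ).submatrix σ id
  have hD : Dᴴ * D = 1 := by
    simp only [D, Matrix.conjTranspose_submatrix, Matrix.conjTranspose_one]
    rw [Matrix.submatrix_mul_equiv]
    simp
  have := gam_int_unitary D hD _ (kk_meas i j j)
  have hv : ∀ (z : Fin 8 → ℂ) l, (D *ᵥ z) l = z (σ l) := by
    intro z l; simp [D, Matrix.mulVec, dotProduct, Matrix.one_apply]
  have h1 : ∀ z : Fin 8 → ℂ, rr i (D *ᵥ z) = rr (σ i) z := by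
    intro z
    refine (rr_perm σ _ _ (fun l => ?_) i).symm
    rw [hv]
  simp only [h1, hv] at this
  exact this

lemma kk_real (i j : Fin 8) : kk i j j = ((∫ w, rr i w * ‖w j‖ ^ 2 ∂gam : ℝ) : ℂ) := by
  unfold kk
  rw [← integral_complex_ofReal]
  congr 1
  ext w
  rw [show star (w j) * w j = (‖w j‖ : ℂ) ^ 2 from Complex.conj_mul' _]
  push_cast; rfl

lemma rr_sq_integrable (i j : Fin 8) : Integrable (fun w : Fin 8 → ℂ => rr i w * ‖w j‖ ^ 2) gam := by
  refine (gam_sq_integrable j).mono ((rr_meas i).mul (by fun_prop)).aestronglyMeasurable (.of_forall fun w => ?_)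
  rw [Real.norm_of_nonneg (mul_nonneg (rr_nonneg i w) (by positivity)), Real.norm_of_nonneg (by positivity)]
  exact mul_le_of_le_one_left (by positivity) (rr_le_one i w)

lemma kk_col (j : Fin 8) : ∑ i, kk i j j = 1 := by
  simp only [kk_real]
  rw [← Complex.ofReal_sum, ← integral_finsetSum _ fun i _ => rr_sq_integrable i j]
  simp only [← Finset.sum_mul, rr_sum, one_mul]
  rw [gam_sq]; simp

lemma kk_diag_sum : ∑ i, kk i i i = 761 / 280 := by
  simp only [kk_real]
  rw [← Complex.ofReal_sum, ← integral_finsetSum _ fun i _ => rr_sq_integrable i i]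
  simp only [rr_mx]
  rw [mx_mean]; norm_num

lemma kk_diag (i : Fin 8) : kk i i i = 761 / 2240 := by
  have h : ∀ j, kk j j j = kk i i i := by
    intro j
    have := kk_perm (Equiv.swap i j) i i
    simpa using this
  have := kk_diag_sum
  simp only [h] at this
  simp at this
  linear_combination this / 8

lemma kk_ne (i j : Fin 8) (hij : i ≠ j) : kk i j j = 1479 / 15680 := by
  have h1 : ∀ k, k ≠ j → kk k j j = kk i j j := by
    intro k hk
    have := kk_perm (Equiv.swap i k) i j
    rw [Equiv.swap_apply_left, Equiv.swap_apply_of_ne_of_ne (Ne.symm hij) (Ne.symm hk)] at this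
    exact this
  have h2 := kk_col j
  rw [← Finset.add_sum_erase _ _ (Finset.mem_univ j), kk_diag] at h2
  rw [Finset.sum_congr rfl (fun k hk => h1 k (Finset.ne_of_mem_erase hk))] at h2
  simp at h2
  linear_combination h2 / 7

lemma quad_expand (G : Matrix (Fin 8) (Fin 8) ℂ) (w : Fin 8 → ℂ) :
    star w ⬝ᵥ (G *ᵥ w) = ∑ j, ∑ k, G j k * (star (w j) * w k) := by
  simp only [dotProduct, Matrix.mulVec, Finset.mul_sum, Pi.star_apply]
  refine Finset.sum_congr rfl fun j _ => Finset.sum_congr rfl fun k _ => ?_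
  ring

lemma quad_int_aux (i : Fin 8) (G : Matrix (Fin 8) (Fin 8) ℂ) (w : Fin 8 → ℂ) :
    (rr i w : ℂ) * (star w ⬝ᵥ (G *ᵥ w)) = ∑ j, ∑ k, G j k * ((rr i w : ℂ) * (star (w j) * w k)) := by
  rw [quad_expand, Finset.mul_sum]
  refine Finset.sum_congr rfl fun j _ => ?_
  rw [Finset.mul_sum]
  refine Finset.sum_congr rfl fun k _ => ?_
  ring

lemma quad_integrable (i : Fin 8) (G : Matrix (Fin 8) (Fin 8) ℂ) :
    Integrable (fun w : Fin 8 → ℂ => (rr i w : ℂ) * (star w ⬝ᵥ (G *ᵥ w))) gam := by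
  simp only [quad_int_aux]
  exact integrable_finsetSum _ fun j _ => integrable_finsetSum _ fun k _ => (kk_integrable i j k).const_mul _

lemma quad_int (i : Fin 8) (G : Matrix (Fin 8) (Fin 8) ℂ) :
    ∫ w, (rr i w : ℂ) * (star w ⬝ᵥ (G *ᵥ w)) ∂gam = 1479 / 15680 * G.trace + 481 / 1960 * G i i := by
  simp only [quad_int_aux]
  have hint : ∀ j ∈ (Finset.univ : Finset (Fin 8)), Integrable (fun w : Fin 8 → ℂ =>
      ∑ k, G j k * ((rr i w : ℂ) * (star (w j) * w k))) gam := fun j _ =>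
    integrable_finsetSum _ fun k _ => (kk_integrable i j k).const_mul _
  rw [integral_finsetSum _ hint]
  have : ∀ j, ∫ w, ∑ k, G j k * ((rr i w : ℂ) * (star (w j) * w k)) ∂gam =
      1479 / 15680 * G j j + if j = i then 481 / 1960 * G i i else 0 := by
    intro j
    rw [integral_finsetSum _ fun k _ => (kk_integrable i j k).const_mul _]
    simp only [integral_const_mul]
    change ∑ k, G j k * kk i j k = _
    rw [Finset.sum_eq_single j]
    · by_cases h : j = i
      · subst h; rw [kk_diag, if_pos rfl]; ring
      · rw [kk_ne i j (Ne.symm h), if_neg h]; ring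
    · intro k _ hk
      rw [kk_off i j k (Ne.symm hk), mul_zero]
    · simp
  simp only [this, Finset.sum_add_distrib]
  simp [Matrix.trace, Finset.mul_sum]

lemma quad_meas (G : Matrix (Fin 8) (Fin 8) ℂ) : Measurable (fun w : Fin 8 → ℂ => star w ⬝ᵥ (G *ᵥ w)) := by
  apply Continuous.measurable
  simp only [quad_expand]
  fun_prop

lemma quad_U (U G : Matrix (Fin 8) (Fin 8) ℂ) (hU : Uᴴ * U = 1) (z : Fin 8 → ℂ) :
    star (U *ᵥ z) ⬝ᵥ ((U * G * Uᴴ) *ᵥ (U *ᵥ z)) = star z ⬝ᵥ (G *ᵥ z) := by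
  rw [Matrix.star_mulVec, Matrix.mulVec_mulVec, Matrix.dotProduct_mulVec, Matrix.vecMul_vecMul,
    Matrix.mul_assoc (U * G), hU, Matrix.mul_one, ← Matrix.mul_assoc, hU, Matrix.one_mul, Matrix.dotProduct_mulVec]

lemma quadU_integrable (i : Fin 8) (U G : Matrix (Fin 8) (Fin 8) ℂ) (hU : Uᴴ * U = 1) :
    Integrable (fun z : Fin 8 → ℂ => (rr i (U *ᵥ z) : ℂ) * (star z ⬝ᵥ (G *ᵥ z))) gam := by
  have := (gam_unitary U hU).integrable_comp_of_integrable (quad_integrable i (U * G * Uᴴ))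
  refine this.congr (.of_forall fun z => ?_)
  simp only [Function.comp]
  rw [quad_U U G hU]

lemma quadU_int (i : Fin 8) (U G : Matrix (Fin 8) (Fin 8) ℂ) (hU : Uᴴ * U = 1) :
    ∫ z, (rr i (U *ᵥ z) : ℂ) * (star z ⬝ᵥ (G *ᵥ z)) ∂gam =
      1479 / 15680 * G.trace + 481 / 1960 * (U * G * Uᴴ) i i := by
  have := gam_int_unitary U hU (fun w => (rr i w : ℂ) * (star w ⬝ᵥ ((U * G * Uᴴ) *ᵥ w)))
    ((Complex.measurable_ofReal.comp (rr_meas i)).mul (quad_meas _))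
  simp only [quad_U U G hU] at this
  rw [this, quad_int, Matrix.trace_mul_comm, ← Matrix.mul_assoc, hU, Matrix.one_mul]

lemma quad0_eq (G : Matrix (Fin 8) (Fin 8) ℂ) (z : Fin 8 → ℂ) :
    star z ⬝ᵥ (G *ᵥ z) = ∑ i, (rr i z : ℂ) * (star z ⬝ᵥ (G *ᵥ z)) := by
  rw [← Finset.sum_mul, ← Complex.ofReal_sum, rr_sum]; simp

lemma quad0_integrable (G : Matrix (Fin 8) (Fin 8) ℂ) :
    Integrable (fun z : Fin 8 → ℂ => star z ⬝ᵥ (G *ᵥ z)) gam := by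
  have := integrable_finsetSum (Finset.univ : Finset (Fin 8)) fun i _ => quad_integrable i G
  exact this.congr (.of_forall fun z => (quad0_eq G z).symm)

lemma quad0_int (G : Matrix (Fin 8) (Fin 8) ℂ) :
    ∫ z, star z ⬝ᵥ (G *ᵥ z) ∂gam = G.trace := by
  rw [integral_congr_ae (.of_forall fun z => quad0_eq G z), integral_finsetSum _ fun i _ => quad_integrable i G]
  simp only [quad_int, Finset.sum_add_distrib, ← Finset.mul_sum]
  simp [Matrix.trace]
  ring

lemma marg {X A : Type*} [Fintype X] [Fintype A] [DecidableEq X] [DecidableEq A] (r : X → A → ℝ)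
    (h : ∀ x, ∑ a, r x a = 1) (x0 : X) (a0 : A) :
    ∑ f : X → A, (∏ x, r x (f x)) * (if f x0 = a0 then 1 else 0) = r x0 a0 := by
  have e : ∀ f : X → A, (∏ x, r x (f x)) * (if f x0 = a0 then 1 else 0) =
      ∏ x, (fun x a => r x a * (if x = x0 then (if a = a0 then 1 else 0) else 1)) x (f x) := by
    intro f
    simp only [Finset.prod_mul_distrib]
    simp
  simp only [e]
  rw [← Fintype.piFinset_univ, ← Finset.prod_univ_sum (fun _ => Finset.univ) (fun x a => r x a * (if x = x0 then (if a = a0 then 1 else 0) else 1))]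
  rw [Finset.prod_eq_single x0]
  · simp
  · intro x _ hx
    simp [hx, h]
  · simp

lemma marg1 {X A : Type*} [Fintype X] [Fintype A] [DecidableEq X] (r : X → A → ℝ)
    (h : ∀ x, ∑ a, r x a = 1) : ∑ f : X → A, (∏ x, r x (f x)) = 1 := by
  classical
  rw [← Fintype.piFinset_univ, ← Finset.prod_univ_sum (fun _ => Finset.univ) r]
  simp [h]

lemma fin_model {Ω : Type*} [MeasurableSpace Ω] (μ : Measure Ω)
    (W : Ω → ℝ) (hW0 : ∀ z, 0 ≤ W z) (hWi : Integrable W μ) (hW1 : ∫ z, W z ∂μ = 1)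
    (X Y A B : Type) [Fintype X] [Fintype Y] [Fintype A] [Fintype B]
    (R : X → A → Ω → ℝ) (S : Y → B → Ω → ℝ)
    (hR0 : ∀ x a z, 0 ≤ R x a z) (hR1 : ∀ x z, ∑ a, R x a z = 1) (hRm : ∀ x a, Measurable (R x a))
    (hS0 : ∀ x a z, 0 ≤ S x a z) (hS1 : ∀ x z, ∑ a, S x a z = 1) (hSm : ∀ x a, Measurable (S x a)) :
    ∃ (nΛ : ℕ) (q : Fin nΛ → ℝ) (P : A → X → Fin nΛ → ℝ) (Q : B → Y → Fin nΛ → ℝ),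
        (∀ μ, 0 ≤ q μ) ∧ (∑ μ, q μ = 1) ∧
        (∀ a x μ, 0 ≤ P a x μ) ∧ (∀ x μ, ∑ a, P a x μ = 1) ∧
        (∀ b y μ, 0 ≤ Q b y μ) ∧ (∀ y μ, ∑ b, Q b y μ = 1) ∧
        (∀ a b x y, ∑ μ, q μ * P a x μ * Q b y μ = ∫ z, W z * R x a z * S y b z ∂μ) := by
  classical
  let e := Fintype.equivFin ((X → A) × (Y → B))
  let D : (X → A) × (Y → B) → Ω → ℝ := fun f z => W z * (∏ x, R x (f.1 x) z) * ∏ y, S y (f.2 y) z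
  have hR2 : ∀ x a z, R x a z ≤ 1 := by
    intro x a z
    rw [← hR1 x z]
    exact Finset.single_le_sum (f := fun a => R x a z) (fun i _ => hR0 x i z) (Finset.mem_univ a)
  have hS2 : ∀ x a z, S x a z ≤ 1 := by
    intro x a z
    rw [← hS1 x z]
    exact Finset.single_le_sum (f := fun a => S x a z) (fun i _ => hS0 x i z) (Finset.mem_univ a)
  have hD0 : ∀ f z, 0 ≤ D f z := fun f z =>
    mul_nonneg (mul_nonneg (hW0 z) (Finset.prod_nonneg fun x _ => hR0 _ _ _)) (Finset.prod_nonneg fun x _ => hS0 _ _ _)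
  have hDi : ∀ f, Integrable (D f) μ := by
    intro f
    refine hWi.mono ?_ (.of_forall fun z => ?_)
    · refine (hWi.aestronglyMeasurable.mul ?_).mul ?_
      · exact (Finset.measurable_fun_prod _ fun x _ => hRm x _).aestronglyMeasurable
      · exact (Finset.measurable_fun_prod _ fun x _ => hSm x _).aestronglyMeasurable
    · rw [Real.norm_of_nonneg (hD0 f z), Real.norm_of_nonneg (hW0 z)]
      have h1 : ∏ x, R x (f.1 x) z ≤ 1 := Finset.prod_le_one (fun x _ => hR0 _ _ _) fun x _ => hR2 _ _ _
      have h2 : ∏ y, S y (f.2 y) z ≤ 1 := Finset.prod_le_one (fun x _ => hS0 _ _ _) fun x _ => hS2 _ _ _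
      have h3 : 0 ≤ ∏ y, S y (f.2 y) z := Finset.prod_nonneg fun x _ => hS0 _ _ _
      calc W z * (∏ x, R x (f.1 x) z) * ∏ y, S y (f.2 y) z ≤ W z * 1 * 1 := by
            have := hW0 z
            gcongr
        _ = W z := by ring
  refine ⟨_, fun k => ∫ z, D (e.symm k) z ∂μ, fun a x k => if (e.symm k).1 x = a then 1 else 0,
    fun b y k => if (e.symm k).2 y = b then 1 else 0, ?_, ?_, ?_, ?_, ?_, ?_, ?_⟩
  · intro k; exact integral_nonneg (hD0 _)
  · rw [Equiv.sum_comp e.symm (fun f => ∫ z, D f z ∂μ), ← integral_finsetSum _ fun f _ => hDi f]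
    rw [← hW1]
    congr 1
    ext z
    simp only [D]
    rw [Fintype.sum_prod_type]
    simp only [← Finset.mul_sum, marg1 (fun y b => S y b z) (fun y => hS1 y z), mul_one,
      marg1 (fun y b => R y b z) (fun y => hR1 y z)]
  · intro a x k; dsimp only; split_ifs <;> norm_num
  · intro x k; simp
  · intro a x k; dsimp only; split_ifs <;> norm_num
  · intro x k; simp
  · intro a b x y
    rw [Equiv.sum_comp e.symm (fun f => (∫ z, D f z ∂μ) * (if f.1 x = a then 1 else 0) * (if f.2 y = b then 1 else 0))]
    simp only [← integral_mul_const]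
    rw [← integral_finsetSum _ fun f _ => ((hDi f).mul_const _).mul_const _]
    congr 1
    ext z
    rw [Fintype.sum_prod_type]
    rw [← marg (fun x a => R x a z) (fun x => hR1 x z) x a, ← marg (fun y b => S y b z) (fun y => hS1 y z) y b]
    rw [mul_assoc, Finset.sum_mul_sum, Finset.mul_sum]
    refine Finset.sum_congr rfl fun f _ => ?_
    rw [Finset.mul_sum]
    refine Finset.sum_congr rfl fun g _ => ?_
    simp only [D]
    ring

end Model

lemma diag_meas {A : Type*} [Fintype A] [DecidableEq A] (M : A → Matrix (Fin 8) (Fin 8) ℂ)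
    (hM : IsProjMeasurement M) : ∃ U : Matrix (Fin 8) (Fin 8) ℂ, Uᴴ * U = 1 ∧ U * Uᴴ = 1 ∧
      ∃ ℓ : Fin 8 → A, ∀ a, M a = Uᴴ * Matrix.diagonal (fun i => if ℓ i = a then 1 else 0) * U := by
  obtain ⟨h1, h2, h3, h4⟩ := hM
  let c : A → ℝ := fun a => ((Fintype.equivFin A a : ℕ) : ℝ)
  have hc : Function.Injective c := by
    intro a b hab
    apply (Fintype.equivFin A).injective
    apply Fin.ext
    exact Nat.cast_injective (R := ℝ) hab
  let H : Matrix (Fin 8) (Fin 8) ℂ := ∑ a, (c a : ℂ) • M a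
  have hH : H.IsHermitian := by
    simp only [H, Matrix.IsHermitian, Matrix.conjTranspose_sum, Matrix.conjTranspose_smul, h1]
    simp
  have hMH : ∀ a, M a * H = (c a : ℂ) • M a := by
    intro a
    simp only [H, Matrix.mul_sum, Matrix.mul_smul]
    rw [Finset.sum_eq_single a]
    · rw [h2]
    · intro b _ hb
      rw [h3 a b (Ne.symm hb), smul_zero]
    · simp
  let V : Matrix (Fin 8) (Fin 8) ℂ := (hH.eigenvectorUnitary : Matrix (Fin 8) (Fin 8) ℂ)
  have hV1 : Vᴴ * V = 1 := by
    have := (Matrix.mem_unitaryGroup_iff').1 hH.eigenvectorUnitary.2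
    exact this
  have hV2 : V * Vᴴ = 1 := by
    have := (Matrix.mem_unitaryGroup_iff).1 hH.eigenvectorUnitary.2
    exact this
  let v : Fin 8 → Fin 8 → ℂ := fun i j => V j i
  have hv : ∀ i, H *ᵥ v i = ((hH.eigenvalues i : ℝ) : ℂ) • v i := by
    intro i
    have := hH.mulVec_eigenvectorBasis i
    exact this
  have hv0 : ∀ i, v i ≠ 0 := by
    intro i h
    have := congrFun (congrFun hV1 i) i
    rw [Matrix.mul_apply, Matrix.one_apply_eq] at this
    have h' : ∀ j, V j i = 0 := fun j => congrFun h j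
    simp [h'] at this
  have key : ∀ a i, ((c a : ℂ) - (hH.eigenvalues i : ℝ)) • (M a *ᵥ v i) = 0 := by
    intro a i
    have e1 : (M a * H) *ᵥ v i = (c a : ℂ) • (M a *ᵥ v i) := by
      rw [hMH, Matrix.smul_mulVec]
    rw [← Matrix.mulVec_mulVec, hv, Matrix.mulVec_smul] at e1
    rw [sub_smul, ← e1, sub_self]
  have hsum : ∀ i, ∑ a, M a *ᵥ v i = v i := by
    intro i
    rw [← Matrix.sum_mulVec, h4, Matrix.one_mulVec]
  have hex : ∀ i, ∃ a, M a *ᵥ v i ≠ 0 := by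
    intro i
    by_contra hcon
    push Not at hcon
    apply hv0 i
    rw [← hsum i]
    exact Finset.sum_eq_zero fun a _ => hcon a
  choose ℓ hℓ using hex
  have hz : ∀ i a, ℓ i ≠ a → M a *ᵥ v i = 0 := by
    intro i a ha
    have k1 := (smul_eq_zero.1 (key (ℓ i) i)).resolve_right (hℓ i)
    rcases smul_eq_zero.1 (key a i) with k2 | k2
    · exfalso
      apply ha
      apply hc
      have : (c (ℓ i) : ℂ) = c a := by linear_combination k1 - k2
      exact_mod_cast this
    · exact k2
  have ho : ∀ i, M (ℓ i) *ᵥ v i = v i := by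
    intro i
    conv_rhs => rw [← hsum i]
    rw [Finset.sum_eq_single (ℓ i)]
    · intro b _ hb
      exact hz i b (Ne.symm hb)
    · simp
  have hMV : ∀ a, M a * V = V * Matrix.diagonal (fun i => if ℓ i = a then 1 else 0) := by
    intro a
    ext j i
    rw [Matrix.mul_diagonal]
    change (M a *ᵥ v i) j = _
    by_cases h : ℓ i = a
    · subst h; rw [ho]; simp [v]
    · rw [hz i a h]; simp [h]
  refine ⟨Vᴴ, by simpa using hV2, by simpa using hV1, ℓ, fun a => ?_⟩
  rw [Matrix.conjTranspose_conjTranspose, ← hMV, Matrix.mul_assoc, hV2, Matrix.mul_one]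

section Final
open MeasureTheory

/-- squared norm -/
noncomputable def nz (z : Fin 8 → ℂ) : ℝ := ∑ i, ‖z i‖ ^ 2

lemma nz_nonneg (z) : 0 ≤ nz z := Finset.sum_nonneg fun i _ => by positivity

lemma nz_meas : Measurable nz := by
  unfold nz
  apply Continuous.measurable
  fun_prop

lemma nz_integrable : Integrable nz gam := integrable_finsetSum _ fun i _ => gam_sq_integrable i

lemma nz_int : ∫ z, nz z ∂gam = 8 := by
  unfold nz
  rw [integral_finsetSum _ fun i _ => gam_sq_integrable i]
  simp [gam_sq]

/-- quadratic form -/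
noncomputable def qf (G : Matrix (Fin 8) (Fin 8) ℂ) (z : Fin 8 → ℂ) : ℝ := (star z ⬝ᵥ (G *ᵥ z)).re

lemma qf_one (z) : qf 1 z = nz z := by
  unfold qf nz
  rw [Matrix.one_mulVec]
  simp only [dotProduct, Pi.star_apply, Complex.re_sum]
  refine Finset.sum_congr rfl fun i _ => ?_
  rw [show star (z i) * z i = (‖z i‖ : ℂ) ^ 2 from Complex.conj_mul' _]
  norm_cast

lemma qf_meas (G) : Measurable (qf G) := Complex.measurable_re.comp (quad_meas G)

lemma qf_sum {B : Type*} [Fintype B] (G : B → Matrix (Fin 8) (Fin 8) ℂ) (z) :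
    ∑ b, qf (G b) z = qf (∑ b, G b) z := by
  unfold qf
  rw [Matrix.sum_mulVec, dotProduct_sum, Complex.re_sum]

lemma qf_zero_of (G : Matrix (Fin 8) (Fin 8) ℂ) (z) (h : nz z = 0) : qf G z = 0 := by
  have : z = 0 := by
    ext i
    have := (Finset.sum_eq_zero_iff_of_nonneg (fun i _ => by positivity)).1 h i (Finset.mem_univ i)
    simpa using this
  subst this
  simp [qf]

/-- the response of the second party -/
noncomputable def ss (G : Matrix (Fin 8) (Fin 8) ℂ) (z : Fin 8 → ℂ) : ℝ :=
  if nz z = 0 then G.trace.re / 8 else qf G z / nz z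

lemma ss_meas (G) : Measurable (ss G) := by
  unfold ss
  refine Measurable.ite ?_ measurable_const ((qf_meas G).div nz_meas)
  exact nz_meas (measurableSet_singleton 0)

lemma ss_nonneg (G : Matrix (Fin 8) (Fin 8) ℂ) (hG : G.PosSemidef) (z) : 0 ≤ ss G z := by
  unfold ss
  split_ifs
  · have := (Complex.le_def.1 hG.trace_nonneg).1
    simp only [Complex.zero_re] at this
    positivity
  · have := (Complex.le_def.1 (hG.dotProduct_mulVec_nonneg z)).1
    exact div_nonneg this (nz_nonneg z)

lemma ss_sum {B : Type*} [Fintype B] (G : B → Matrix (Fin 8) (Fin 8) ℂ) (h : ∑ b, G b = 1) (z) :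
    ∑ b, ss (G b) z = 1 := by
  unfold ss
  split_ifs with h0
  · rw [← Finset.sum_div, ← Complex.re_sum, ← Matrix.trace_sum, h]; simp
  · rw [← Finset.sum_div, qf_sum, h, qf_one, div_self h0]

lemma nz_ss (G z) : nz z * ss G z = qf G z := by
  unfold ss
  split_ifs with h
  · rw [h, qf_zero_of G z h, zero_mul]
  · field_simp

lemma psd_of_proj (N : Matrix (Fin 8) (Fin 8) ℂ) (h1 : Nᴴ = N) (h2 : N * N = N) : Nᵀ.PosSemidef := by
  have : N.PosSemidef := by
    have h := Matrix.posSemidef_conjTranspose_mul_self N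
    rwa [h1, h2] at h
  exact this.transpose

lemma qf_real (G : Matrix (Fin 8) (Fin 8) ℂ) (hG : G.PosSemidef) (z) :
    ((qf G z : ℝ) : ℂ) = star z ⬝ᵥ (G *ᵥ z) := by
  have := (Complex.le_def.1 (hG.dotProduct_mulVec_nonneg z)).2
  apply Complex.ext
  · simp [qf]
  · rw [Complex.ofReal_im]; simpa using this

/-- the response of the first party -/
noncomputable def rs {A : Type*} [DecidableEq A] (U : Matrix (Fin 8) (Fin 8) ℂ) (ℓ : Fin 8 → A) (a : A)
    (z : Fin 8 → ℂ) : ℝ :=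
  ∑ i, if ℓ i = a then (4704 / 4810) * rr i (U *ᵥ z) + 106 / 38480 else 0

lemma rs_nonneg {A : Type*} [DecidableEq A] (U) (ℓ : Fin 8 → A) (a z) : 0 ≤ rs U ℓ a z := by
  refine Finset.sum_nonneg fun i _ => ?_
  have := rr_nonneg i (U *ᵥ z)
  split_ifs <;> positivity

lemma rs_sum {A : Type*} [Fintype A] [DecidableEq A] (U) (ℓ : Fin 8 → A) (z) : ∑ a, rs U ℓ a z = 1 := by
  unfold rs
  rw [Finset.sum_comm]
  simp only [Finset.sum_ite_eq, Finset.mem_univ, if_true]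
  rw [Finset.sum_add_distrib, ← Finset.mul_sum, rr_sum]
  simp
  norm_num

lemma rs_meas {A : Type*} [DecidableEq A] (U) (ℓ : Fin 8 → A) (a) : Measurable (rs U ℓ a) := by
  unfold rs
  refine Finset.measurable_fun_sum _ fun i _ => ?_
  split_ifs
  · have : Measurable (fun z : Fin 8 → ℂ => U *ᵥ z) := by
      apply Continuous.measurable; fun_prop
    exact (((rr_meas i).comp this).const_mul _).add_const _
  · exact measurable_const

lemma model_int {A : Type*} [DecidableEq A] (U G : Matrix (Fin 8) (Fin 8) ℂ) (hU : Uᴴ * U = 1)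
    (hG : G.PosSemidef) (ℓ : Fin 8 → A) (a : A) :
    ((∫ z, nz z / 8 * rs U ℓ a z * ss G z ∂gam : ℝ) : ℂ) =
      ∑ i, if ℓ i = a then 0.03 * (U * G * Uᴴ) i i + 0.011875 * G.trace else 0 := by
  rw [← integral_complex_ofReal]
  have e : ∀ z, ((nz z / 8 * rs U ℓ a z * ss G z : ℝ) : ℂ) =
      ∑ i, if ℓ i = a then (4704 / 38480 : ℂ) * ((rr i (U *ᵥ z) : ℂ) * (star z ⬝ᵥ (G *ᵥ z))) +
        106 / 307840 * (star z ⬝ᵥ (G *ᵥ z)) else 0 := by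
    intro z
    have : nz z / 8 * rs U ℓ a z * ss G z = rs U ℓ a z * qf G z / 8 := by
      rw [← nz_ss]; ring
    rw [this]
    unfold rs
    rw [Finset.sum_mul, Finset.sum_div, Complex.ofReal_sum]
    refine Finset.sum_congr rfl fun i _ => ?_
    split_ifs
    · push_cast
      rw [qf_real G hG]
      ring
    · simp
  simp only [e]
  have hint : ∀ i ∈ (Finset.univ : Finset (Fin 8)), Integrable (fun z : Fin 8 → ℂ =>
      if ℓ i = a then (4704 / 38480 : ℂ) * ((rr i (U *ᵥ z) : ℂ) * (star z ⬝ᵥ (G *ᵥ z))) +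
        106 / 307840 * (star z ⬝ᵥ (G *ᵥ z)) else 0) gam := by
    intro i _
    split_ifs
    · exact ((quadU_integrable i U G hU).const_mul _).add ((quad0_integrable G).const_mul _)
    · exact integrable_zero _ _ _
  rw [integral_finsetSum _ hint]
  refine Finset.sum_congr rfl fun i _ => ?_
  split_ifs
  · rw [integral_add ((quadU_integrable i U G hU).const_mul _) ((quad0_integrable G).const_mul _),
      integral_const_mul, integral_const_mul, quadU_int i U G hU, quad0_int]
    ring
  · simp

lemma iso_val {A : Type*} [DecidableEq A] (U N M : Matrix (Fin 8) (Fin 8) ℂ) (hU : U * Uᴴ = 1)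
    (ℓ : Fin 8 → A) (a : A)
    (hM : M = Uᴴ * Matrix.diagonal (fun i => if ℓ i = a then 1 else 0) * U) :
    ((M ⊗ₖ N) * isoState 8 0.24).trace =
      ∑ i, if ℓ i = a then 0.03 * (U * Nᵀ * Uᴴ) i i + 0.011875 * Nᵀ.trace else 0 := by
  rw [tr_iso]
  have e1 : ∑ i, ∑ j, M i j * N i j = (M * Nᵀ).trace := by
    simp only [Matrix.trace, Matrix.diag, Matrix.mul_apply, Matrix.transpose_apply]
  have e2 : (M * Nᵀ).trace = ∑ i, if ℓ i = a then (U * Nᵀ * Uᴴ) i i else 0 := by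
    rw [hM, Matrix.mul_assoc, Matrix.mul_assoc, Matrix.trace_mul_comm, Matrix.mul_assoc]
    simp only [Matrix.trace, Matrix.diag, Matrix.diagonal_mul]
    simp
  have e3 : M.trace = ∑ i, if ℓ i = a then 1 else 0 := by
    rw [hM, Matrix.trace_mul_comm, ← Matrix.mul_assoc, hU, Matrix.one_mul, Matrix.trace_diagonal]
  rw [e1, e2, e3, Matrix.trace_transpose, Finset.mul_sum, Finset.sum_mul, Finset.mul_sum, ← Finset.sum_add_distrib]
  refine Finset.sum_congr rfl fun i _ => ?_
  split_ifs <;> simp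

lemma part_c (l : ℝ) (X Y A B : Type) [Fintype X] [Fintype Y] [Fintype A] [Fintype B]
      (M : X → A → Matrix (Fin 8) (Fin 8) ℂ) (N : Y → B → Matrix (Fin 8) (Fin 8) ℂ)
      (hM : ∀ x, IsProjMeasurement (M x)) (hN : ∀ y, IsProjMeasurement (N y)) :
      ∃ (nΛ : ℕ) (q : Fin nΛ → ℝ) (P : A → X → Fin nΛ → ℝ) (Q : B → Y → Fin nΛ → ℝ),
        (∀ μ, 0 ≤ q μ) ∧ (∑ μ, q μ = 1) ∧
        (∀ a x μ, 0 ≤ P a x μ) ∧ (∀ x μ, ∑ a, P a x μ = 1) ∧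
        (∀ b y μ, 0 ≤ Q b y μ) ∧ (∀ y μ, ∑ b, Q b y μ = 1) ∧
        (∀ a b x y,
          Matrix.trace ((M x a ⊗ₖ N y b) * rhoTilde l) =
            ((l * ∑ μ, q μ * P a x μ * Q b y μ : ℝ) : ℂ) +
            ((1 - l : ℝ) : ℂ) * (star phi2 ⬝ᵥ ((M x a ⊗ₖ N y b) *ᵥ phi2))) := by
  classical
  choose U hU1 hU2 ℓ hℓ using fun x => diag_meas (M x) (hM x)
  have hG : ∀ y b, ((N y b)ᵀ).PosSemidef := fun y b => psd_of_proj _ ((hN y).1 b) ((hN y).2.1 b)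
  have hGs : ∀ y, ∑ b, (N y b)ᵀ = 1 := by
    intro y
    rw [← Matrix.transpose_sum, (hN y).2.2.2, Matrix.transpose_one]
  obtain ⟨n, q, P, Q, h1, h2, h3, h4, h5, h6, h7⟩ := fin_model gam (fun z => nz z / 8)
    (fun z => div_nonneg (nz_nonneg z) (by norm_num)) (nz_integrable.div_const 8)
    (by rw [integral_div, nz_int]; norm_num) X Y A B
    (fun x a => rs (U x) (ℓ x) a) (fun y b => ss ((N y b)ᵀ))
    (fun x a z => rs_nonneg _ _ _ _) (fun x z => rs_sum _ _ _) (fun x a => rs_meas _ _ _)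
    (fun y b z => ss_nonneg _ (hG y b) z) (fun y z => ss_sum _ (hGs y) z) (fun y b => ss_meas _)
  refine ⟨n, q, P, Q, h1, h2, h3, h4, h5, h6, fun a b x y => ?_⟩
  rw [tr_rho, h7, Complex.ofReal_mul, model_int (U x) _ (hU1 x) (hG y b),
    iso_val (U x) (N y b) (M x a) (hU2 x) (ℓ x) a (hℓ x a)]

end Final

/-- Theorem 1: for `0 < λ < 0.312`, the state `ρ̃(λ)` has Schmidt number 3
and is Bell-nonlocal under projective measurements (it violates CHSH), yet all of its
correlations under local projective measurements can be simulated using shared randomness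
together with the Schmidt-rank-2 state `|φ₂⁺⟩`. -/
theorem nonlocal_state_schmidt_number_not_certifiable_projective
    (l : ℝ) (hl0 : 0 < l) (hl1 : l < 0.312) :
    schmidtNumber (rhoTilde l) = 3 ∧
    (∃ A₀ A₁ B₀ B₁ : Matrix (Fin 8) (Fin 8) ℂ,
      IsPMObservable A₀ ∧ IsPMObservable A₁ ∧ IsPMObservable B₀ ∧ IsPMObservable B₁ ∧
      (2 : ℂ) < Matrix.trace
        (rhoTilde l * (A₀ ⊗ₖ B₀ + A₀ ⊗ₖ B₁ + A₁ ⊗ₖ B₀ - A₁ ⊗ₖ B₁))) ∧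
    (∀ (X Y A B : Type) [Fintype X] [Fintype Y] [Fintype A] [Fintype B]
      (M : X → A → Matrix (Fin 8) (Fin 8) ℂ) (N : Y → B → Matrix (Fin 8) (Fin 8) ℂ),
      (∀ x, IsProjMeasurement (M x)) → (∀ y, IsProjMeasurement (N y)) →
      ∃ (nΛ : ℕ) (q : Fin nΛ → ℝ) (P : A → X → Fin nΛ → ℝ) (Q : B → Y → Fin nΛ → ℝ),
        (∀ μ, 0 ≤ q μ) ∧ (∑ μ, q μ = 1) ∧
        (∀ a x μ, 0 ≤ P a x μ) ∧ (∀ x μ, ∑ a, P a x μ = 1) ∧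
        (∀ b y μ, 0 ≤ Q b y μ) ∧ (∀ y μ, ∑ b, Q b y μ = 1) ∧
        (∀ a b x y,
          Matrix.trace ((M x a ⊗ₖ N y b) * rhoTilde l) =
            ((l * ∑ μ, q μ * P a x μ * Q b y μ : ℝ) : ℂ) +
            ((1 - l : ℝ) : ℂ) * (star phi2 ⬝ᵥ ((M x a ⊗ₖ N y b) *ᵥ phi2)))) := by
  exact ⟨part_a l hl0 hl1, part_b l hl0 hl1, fun X Y A B _ _ _ _ M N hM hN =>
    part_c l X Y A B M N hM hN⟩
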